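/- Let Q : ℂⁿ × ℂⁿ → ℂ be a polynomial function of its 2n complex variables (w, z) and define the holomorphic Laplacian ΔQ = Σ_{i=1}^n ∂²Q/∂w_i ∂z_i. Then for every z ∈ ℂⁿ the Gaussian average of the shifted polynomial equals the heat-operator action relating antinormal and normal symbols: π^{−n} ∫_{ℂⁿ} e^{−‖ζ‖²} Q( conj(z+ζ), z+ζ ) dζ = Σ_{m=0}^∞ (1/m!) (Δ^m Q)( conj(z), z ), where the sum on the right is finite since Q is a polynomial. -/

import Mathlib

open MeasureTheory
open scoped ComplexConjugate Real

/-- The holomorphic Laplacian `ΔQ = Σᵢ ∂²Q/∂wᵢ∂zᵢ` on polynomials in the `2n` variables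
`(w, z)`, with the `w`-variables indexed by `Sum.inl` and the `z`-variables by `Sum.inr`. -/
noncomputable def holomorphicLaplacian {n : ℕ} (Q : MvPolynomial (Fin n ⊕ Fin n) ℂ) :
    MvPolynomial (Fin n ⊕ Fin n) ℂ :=
  ∑ i : Fin n, MvPolynomial.pderiv (Sum.inl i) (MvPolynomial.pderiv (Sum.inr i) Q)

namespace HeatAux
open MvPolynomial

theorem poly_induct {σ : Type*} (τ : σ → σ) (p : MvPolynomial σ ℂ → Prop)
    (h0 : p 1) (hadd : ∀ P Q, p P → p Q → p (P + Q)) (hC : ∀ a P, p P → p (C a * P))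
    (hX : ∀ i P, p P → p (pderiv (τ i) P) → p (X i * P)) (Q : MvPolynomial σ ℂ) : p Q := by
  have key : ∀ d : ℕ, ∀ s : σ →₀ ℕ, s.degree = d → ∀ a : ℂ, p (monomial s a) := by
    intro d
    induction d using Nat.strong_induction_on with
    | _ d ih =>
      intro s hs a
      by_cases h : s = 0
      · subst h
        have := hC a 1 h0
        simpa using this
      · obtain ⟨i, hi⟩ : ∃ i, s i ≠ 0 := by
          by_contra! hc
          exact h (Finsupp.ext hc)
        obtain ⟨s', rfl⟩ : ∃ s', s = Finsupp.single i 1 + s' := by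
          refine ⟨s - Finsupp.single i 1, ?_⟩
          rw [add_tsub_cancel_of_le]
          simpa [Finsupp.single_le_iff] using Nat.one_le_iff_ne_zero.mpr hi
        have hd : s'.degree < d := by
          rw [← hs]; simp
        have e : monomial (Finsupp.single i 1 + s') a = X i * monomial s' a := by
          rw [X, monomial_mul, one_mul]
        rw [e]
        refine hX i _ (ih _ hd _ rfl _) ?_
        rw [pderiv_monomial]
        refine ih _ (lt_of_le_of_lt ?_ hd) _ rfl _
        exact Finsupp.degree_mono tsub_le_self
  induction Q using MvPolynomial.induction_on' with
  | monomial s a => exact key _ s rfl a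
  | add P Q hP hQ => exact hadd _ _ hP hQ

theorem pderiv_comm' {σ : Type*} (i j : σ) (P : MvPolynomial σ ℂ) :
    pderiv i (pderiv j P) = pderiv j (pderiv i P) := by
  classical
  have : ⁅(pderiv i : Derivation ℂ (MvPolynomial σ ℂ) (MvPolynomial σ ℂ)),
      (pderiv j : Derivation ℂ (MvPolynomial σ ℂ) (MvPolynomial σ ℂ))⁆ = 0 := by
    apply derivation_ext
    intro k
    simp only [Derivation.commutator_apply, pderiv_X, Pi.single_apply]
    split_ifs <;> simp
  have := congrArg (fun D => D P) this
  simpa [Derivation.commutator_apply, sub_eq_zero] using this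

/-- The Laplacian as a linear map. -/
noncomputable def lapl (n : ℕ) : Module.End ℂ (MvPolynomial (Fin n ⊕ Fin n) ℂ) :=
  ∑ i : Fin n, (pderiv (R := ℂ) (Sum.inl i : Fin n ⊕ Fin n)).toLinearMap ∘ₗ
    (pderiv (R := ℂ) (Sum.inr i : Fin n ⊕ Fin n)).toLinearMap

variable {n : ℕ}

theorem lapl_apply (Q : MvPolynomial (Fin n ⊕ Fin n) ℂ) :
    lapl n Q = ∑ i : Fin n, pderiv (Sum.inl i) (pderiv (Sum.inr i) Q) := by
  simp [lapl]

theorem lapl_iter (m : ℕ) (Q : MvPolynomial (Fin n ⊕ Fin n) ℂ) :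
    holomorphicLaplacian^[m] Q = (lapl n ^ m) Q := by
  have : (holomorphicLaplacian : MvPolynomial (Fin n ⊕ Fin n) ℂ → _) = lapl n := by
    funext Q; rw [lapl_apply]; rfl
  rw [this, Module.End.pow_apply]

theorem lapl_pderiv (s) (Q : MvPolynomial (Fin n ⊕ Fin n) ℂ) :
    lapl n (pderiv s Q) = pderiv s (lapl n Q) := by
  simp only [lapl_apply, map_sum]
  refine Finset.sum_congr rfl fun i _ => ?_
  rw [pderiv_comm' (Sum.inr i) s, pderiv_comm' (Sum.inl i) s]

theorem lapl_X (s : Fin n ⊕ Fin n) (Q : MvPolynomial (Fin n ⊕ Fin n) ℂ) :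
    lapl n (X s * Q) = X s * lapl n Q + pderiv s.swap Q := by
  classical
  simp only [lapl_apply, Finset.mul_sum]
  rcases s with j | j
  · have : ∀ i : Fin n, pderiv (Sum.inl i) (pderiv (Sum.inr i) (X (Sum.inl j) * Q)) =
        X (Sum.inl j) * pderiv (Sum.inl i) (pderiv (Sum.inr i) Q) +
          if i = j then pderiv (Sum.inr j) Q else 0 := by
      intro i
      by_cases h : i = j
      · subst h; simp [pderiv_X]
      · simp [pderiv_X, h, Ne.symm h]
    simp only [this, Finset.sum_add_distrib]
    simp
  · have : ∀ i : Fin n, pderiv (Sum.inl i) (pderiv (Sum.inr i) (X (Sum.inr j) * Q)) =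
        X (Sum.inr j) * pderiv (Sum.inl i) (pderiv (Sum.inr i) Q) +
          if i = j then pderiv (Sum.inl j) Q else 0 := by
      intro i
      by_cases h : i = j
      · subst h; simp [pderiv_X]
      · simp [pderiv_X, h, Ne.symm h]
    simp only [this, Finset.sum_add_distrib]
    simp

theorem lapl_pow_X (s : Fin n ⊕ Fin n) (Q : MvPolynomial (Fin n ⊕ Fin n) ℂ) (m : ℕ) :
    (lapl n ^ (m + 1)) (X s * Q) =
      X s * (lapl n ^ (m + 1)) Q + (m + 1 : ℂ) • (lapl n ^ m) (pderiv s.swap Q) := by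
  induction m with
  | zero => simp [lapl_X]
  | succ m ih =>
    rw [pow_succ', Module.End.mul_apply, ih, map_add, lapl_X, map_smul]
    have h : pderiv s.swap ((lapl n ^ (m + 1)) Q) = (lapl n ^ (m + 1)) (pderiv s.swap Q) := by
      generalize m + 1 = k
      induction k with
      | zero => simp
      | succ k ih => rw [pow_succ', Module.End.mul_apply, Module.End.mul_apply, ← ih, lapl_pderiv]
    rw [h, ← Module.End.mul_apply, ← pow_succ', ← Module.End.mul_apply, ← pow_succ', add_assoc]
    push_cast
    congr 1
    rw [add_smul (m + 1 : ℂ) (1 : ℂ), one_smul, add_comm]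

theorem lapl_nil (Q : MvPolynomial (Fin n ⊕ Fin n) ℂ) :
    ∃ N, ∀ m ≥ N, (lapl n ^ m) Q = 0 := by
  induction Q using poly_induct Sum.swap with
  | h0 =>
    refine ⟨1, fun m hm => ?_⟩
    obtain ⟨k, rfl⟩ := Nat.exists_eq_add_of_le' hm
    rw [pow_succ, Module.End.mul_apply, lapl_apply]
    simp
  | hadd P Q hP hQ =>
    obtain ⟨N, hN⟩ := hP
    obtain ⟨M, hM⟩ := hQ
    refine ⟨max N M, fun m hm => ?_⟩
    rw [map_add, hN m (le_trans (le_max_left _ _) hm), hM m (le_trans (le_max_right _ _) hm), add_zero]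
  | hC a P hP =>
    obtain ⟨N, hN⟩ := hP
    refine ⟨N, fun m hm => ?_⟩
    rw [C_mul', map_smul, hN m hm, smul_zero]
  | hX i P hP hQ =>
    obtain ⟨N, hN⟩ := hP
    obtain ⟨M, hM⟩ := hQ
    refine ⟨max N M + 1, fun m hm => ?_⟩
    obtain ⟨k, rfl⟩ := Nat.exists_eq_add_of_le' (le_trans (Nat.le_add_left 1 _) hm)
    rw [lapl_pow_X, hN _ (by omega), hM _ (by omega)]
    simp

/-- The right-hand side. -/
noncomputable def R (x : Fin n ⊕ Fin n → ℂ) (Q : MvPolynomial (Fin n ⊕ Fin n) ℂ) : ℂ :=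
  ∑' m : ℕ, ((Nat.factorial m : ℂ))⁻¹ * eval x ((lapl n ^ m) Q)

theorem R_summable (x : Fin n ⊕ Fin n → ℂ) (Q : MvPolynomial (Fin n ⊕ Fin n) ℂ) :
    Summable fun m : ℕ => ((Nat.factorial m : ℂ))⁻¹ * eval x ((lapl n ^ m) Q) := by
  obtain ⟨N, hN⟩ := lapl_nil Q
  refine summable_of_ne_finset_zero (s := Finset.range N) fun m hm => ?_
  rw [hN m (by simpa using hm)]; simp

theorem R_add (x : Fin n ⊕ Fin n → ℂ) (P Q : MvPolynomial (Fin n ⊕ Fin n) ℂ) :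
    R x (P + Q) = R x P + R x Q := by
  unfold R
  rw [← (R_summable x P).tsum_add (R_summable x Q)]
  simp [mul_add]

theorem R_C (x : Fin n ⊕ Fin n → ℂ) (a : ℂ) (P : MvPolynomial (Fin n ⊕ Fin n) ℂ) :
    R x (C a * P) = a * R x P := by
  unfold R
  rw [← tsum_mul_left]
  refine tsum_congr fun m => ?_
  rw [C_mul', map_smul, smul_eval]; ring

theorem R_one (x : Fin n ⊕ Fin n → ℂ) : R x 1 = 1 := by
  unfold R
  rw [tsum_eq_single 0]
  · simp
  · intro m hm
    obtain ⟨k, rfl⟩ := Nat.exists_eq_succ_of_ne_zero hm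
    rw [Nat.succ_eq_add_one, pow_succ, Module.End.mul_apply, lapl_apply]
    simp

theorem R_X (x : Fin n ⊕ Fin n → ℂ) (s) (P : MvPolynomial (Fin n ⊕ Fin n) ℂ) :
    R x (X s * P) = x s * R x P + R x (pderiv s.swap P) := by
  unfold R
  rw [(R_summable x (X s * P)).tsum_eq_zero_add, (R_summable x P).tsum_eq_zero_add, mul_add,
    ← tsum_mul_left, add_assoc, ← Summable.tsum_add]
  · congr 1
    · simp
    refine tsum_congr fun m => ?_
    rw [lapl_pow_X, Nat.factorial_succ]
    have h1 : (m.factorial : ℂ) ≠ 0 := by exact_mod_cast m.factorial_ne_zero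
    have h2 : (m + 1 : ℂ) ≠ 0 := by exact_mod_cast m.succ_ne_zero
    simp only [map_add, map_mul, eval_X, smul_eval]
    push_cast
    field_simp
  · exact ((summable_nat_add_iff 1).mpr (R_summable x P)).mul_left _
  · exact R_summable x _

theorem hasDerivAt_eval {σ : Type*} [Fintype σ] (u : ℝ → σ → ℂ) (u' : σ → ℂ) (t : ℝ)
    (h : ∀ s, HasDerivAt (fun r => u r s) (u' s) t) (Q : MvPolynomial σ ℂ) :
    HasDerivAt (fun r => eval (u r) Q) (∑ s, u' s * eval (u t) (pderiv s Q)) t := by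
  classical
  induction Q using MvPolynomial.induction_on with
  | C a => simpa using hasDerivAt_const t a
  | add P Q hP hQ =>
    have := hP.add hQ
    simpa only [map_add, mul_add, Finset.sum_add_distrib] using! this
  | mul_X P i hP =>
    have := hP.mul (h i)
    simp only [map_mul, eval_X]
    refine HasDerivAt.congr_deriv this ?_
    symm
    have e : ∀ s, u' s * eval (u t) (pderiv s (P * X i)) =
        u' s * eval (u t) (pderiv s P) * u t i + if s = i then eval (u t) P * u' i else 0 := by
      intro s
      by_cases hs : s = i
      · subst hs; simp [mul_add]; ring
      · simp [pderiv_X_of_ne (Ne.symm hs), hs]; ring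
    simp only [e, Finset.sum_add_distrib, ← Finset.sum_mul]
    simp

/-- The point of evaluation. -/
def pt (z : Fin n → ℂ) : Fin n ⊕ Fin n → ℂ := Sum.elim (fun i => conj (z i)) (fun i => z i)

/-- The Gaussian weight. -/
noncomputable def G (ζ : Fin n → ℂ) : ℂ := Complex.exp (-((∑ i, Complex.normSq (ζ i) : ℝ) : ℂ))

theorem pt_deriv (z ζ v : Fin n → ℂ) (s) :
    HasDerivAt (fun t : ℝ => pt (z + (ζ + t • v)) s) (pt v s) 0 := by
  have h : ∀ j, HasDerivAt (fun t : ℝ => z j + (ζ j + (t : ℂ) * v j)) (v j) 0 := by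
    intro j
    have := (((Complex.ofRealCLM.hasDerivAt (x := (0 : ℝ))).mul_const (v j)).const_add (ζ j)).const_add (z j)
    simpa using this
  rcases s with j | j
  · have := (h j).star
    simpa [pt] using! this
  · simpa [pt] using h j

theorem eval_lineDeriv (z ζ v : Fin n → ℂ) (Q : MvPolynomial (Fin n ⊕ Fin n) ℂ) :
    HasLineDerivAt ℝ (fun ζ => eval (pt (z + ζ)) Q)
      (eval (pt (z + ζ)) (∑ s, C (pt v s) * pderiv s Q)) ζ v := by
  have := hasDerivAt_eval (fun t : ℝ => pt (z + (ζ + t • v))) (pt v) 0 (pt_deriv z ζ v) Q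
  simpa [HasLineDerivAt] using this

theorem G_eq (ζ : Fin n → ℂ) : G ζ = Complex.exp (-∑ i, conj (ζ i) * ζ i) := by
  simp [G, Complex.normSq_eq_conj_mul_self]

theorem G_lineDeriv (z ζ v : Fin n → ℂ) :
    HasLineDerivAt ℝ (G (n := n))
      (-(G ζ * eval (pt (z + ζ)) (∑ s, C (pt v s) * (X s.swap - C (pt z s.swap))))) ζ v := by
  have h1 : HasDerivAt (fun t : ℝ => -∑ i, pt (0 + (ζ + t • v)) (Sum.inl i) * pt (0 + (ζ + t • v)) (Sum.inr i))
    (-∑ i, (pt v (Sum.inl i) * ζ i + conj (ζ i) * pt v (Sum.inr i))) 0 := by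
    refine HasDerivAt.neg (HasDerivAt.fun_sum fun i _ => ?_)
    have := (pt_deriv 0 ζ v (Sum.inl i)).mul (pt_deriv 0 ζ v (Sum.inr i))
    simpa [pt] using! this
  have h2 := h1.cexp
  unfold HasLineDerivAt
  have e : (fun t : ℝ => G (ζ + t • v)) = fun x : ℝ => Complex.exp (-∑ i,
      pt (0 + (ζ + x • v)) (Sum.inl i) * pt (0 + (ζ + x • v)) (Sum.inr i)) := by
    funext t
    simp [G_eq, pt]
  rw [e]
  refine HasDerivAt.congr_deriv h2 ?_
  simp [G_eq, pt, Finset.sum_add_distrib]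
  simp only [mul_comm (v _)]
  ring

theorem growth (z : Fin n → ℂ) (Q : MvPolynomial (Fin n ⊕ Fin n) ℂ) :
    ∀ ε : ℝ, 0 < ε → ∃ K : ℝ, ∀ ζ, ‖eval (pt (z + ζ)) Q‖ ≤
      K * Real.exp (ε * ∑ i, Complex.normSq (ζ i)) := by
  have hE : ∀ ε : ℝ, 0 < ε → ∀ ζ : Fin n → ℂ,  1 ≤ Real.exp (ε * ∑ i, Complex.normSq (ζ i)) := by
    intro ε hε ζ
    apply Real.one_le_exp
    have := Finset.sum_nonneg (fun i (_ : i ∈ Finset.univ) => Complex.normSq_nonneg (ζ i))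
    positivity
  induction Q using MvPolynomial.induction_on with
  | C a =>
    intro ε hε
    refine ⟨‖a‖, fun ζ => ?_⟩
    simpa using le_mul_of_one_le_right (norm_nonneg a) (hE ε hε ζ)
  | add P Q hP hQ =>
    intro ε hε
    obtain ⟨K, hK⟩ := hP ε hε
    obtain ⟨L, hL⟩ := hQ ε hε
    refine ⟨K + L, fun ζ => ?_⟩
    rw [map_add, add_mul]
    exact (norm_add_le _ _).trans (add_le_add (hK ζ) (hL ζ))
  | mul_X P s hP =>
    intro ε hε
    obtain ⟨K, hK⟩ := hP (ε / 2) (by positivity)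
    have hs : ∃ i, ∀ ζ, ‖pt (z + ζ) s‖ = ‖z i + ζ i‖ := by
      rcases s with i | i
      · exact ⟨i, fun ζ => by simp only [pt, Sum.elim_inl, Complex.norm_conj, Pi.add_apply]⟩
      · exact ⟨i, fun ζ => rfl⟩
    obtain ⟨i, hi⟩ := hs
    refine ⟨K * (‖z i‖ + 1 + 2 / ε), fun ζ => ?_⟩
    rw [map_mul, norm_mul, eval_X, hi]
    have e : Real.exp (ε * ∑ i, Complex.normSq (ζ i)) =
      Real.exp (ε / 2 * ∑ i, Complex.normSq (ζ i)) * Real.exp (ε / 2 * ∑ i, Complex.normSq (ζ i)) := by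
      rw [← Real.exp_add]; congr 1; ring
    have h1 := hE (ε / 2) (by positivity) ζ
    have h2 : ‖z i + ζ i‖ ≤ (‖z i‖ + 1 + 2 / ε) * Real.exp (ε / 2 * ∑ i, Complex.normSq (ζ i)) := by
      have h3 : ‖ζ i‖ ^ 2 ≤ ∑ i, Complex.normSq (ζ i) := by
        rw [← Complex.normSq_eq_norm_sq]
        exact Finset.single_le_sum (f := fun i => Complex.normSq (ζ i))
          (fun i _ => Complex.normSq_nonneg (ζ i)) (Finset.mem_univ i)
      have h4 := Real.add_one_le_exp (ε / 2 * ∑ i, Complex.normSq (ζ i))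
      have h5 : ∑ i, Complex.normSq (ζ i) ≤ 2 / ε * Real.exp (ε / 2 * ∑ i, Complex.normSq (ζ i)) := by
        rw [div_mul_eq_mul_div, le_div_iff₀ hε]; linarith
      have h6 : ‖ζ i‖ ≤ 1 + ‖ζ i‖ ^ 2 := by nlinarith [sq_nonneg (‖ζ i‖ - 1)]
      have h7 := le_mul_of_one_le_right (norm_nonneg (z i)) h1
      have := norm_add_le (z i) (ζ i)
      nlinarith
    rw [e]
    calc _ ≤ _ := mul_le_mul (hK ζ) h2 (norm_nonneg _) ((norm_nonneg _).trans (hK ζ))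
      _ = _ := by ring

theorem gauss_integrable (b : ℝ) (hb : 0 < b) :
    Integrable fun ζ : Fin n → ℂ => Real.exp (-b * ∑ i, Complex.normSq (ζ i)) := by
  have h : Integrable fun ζ : ℂ => Real.exp (-b * Complex.normSq ζ) := by
    have := (GaussianFourier.integrable_cexp_neg_mul_sq_norm_add (V := ℂ) (b := b) (by simpa) 0 0).norm
    simpa [Complex.norm_exp, Complex.normSq_eq_norm_sq, ← Complex.ofReal_pow] using this
  have := Integrable.fintype_prod (ι := Fin n) (μ := fun _ => volume) (fun _ => h)
  simpa [← Real.exp_sum, Finset.mul_sum, volume_pi] using this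

theorem G_norm (ζ : Fin n → ℂ) : ‖G ζ‖ = Real.exp (-1 * ∑ i, Complex.normSq (ζ i)) := by
  simp only [G, Complex.norm_exp]; simp

theorem pt_cont (z : Fin n → ℂ) : Continuous fun ζ => pt (z + ζ) := by
  refine continuous_pi fun s => ?_
  rcases s with i | i <;> simp only [pt, Sum.elim_inl, Sum.elim_inr] <;> fun_prop

theorem A_int (z : Fin n → ℂ) (Q : MvPolynomial (Fin n ⊕ Fin n) ℂ) :
    Integrable fun ζ => G ζ * eval (pt (z + ζ)) Q := by
  obtain ⟨K, hK⟩ := growth z Q (1 / 2) (by norm_num)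
  refine ((gauss_integrable (n := n) (1 / 2) (by norm_num)).const_mul K).mono' ?_ (ae_of_all _ fun ζ => ?_)
  · apply Continuous.aestronglyMeasurable
    refine Continuous.mul ?_ ((MvPolynomial.continuous_eval Q).comp (pt_cont z))
    rw [show (G (n := n)) = _ from funext G_eq]
    have := fun i : Fin n => Complex.continuous_conj.comp (continuous_apply (A := fun _ => ℂ) i)
    fun_prop
  · rw [norm_mul, G_norm]
    calc _ ≤ _ := mul_le_mul_of_nonneg_left (hK ζ) (Real.exp_nonneg _)
      _ = _ := by
        rw [mul_left_comm, ← Real.exp_add]; congr 2; ring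

/-- The unnormalized Gaussian average. -/
noncomputable def A (z : Fin n → ℂ) (Q : MvPolynomial (Fin n ⊕ Fin n) ℂ) : ℂ :=
  ∫ ζ, G ζ * eval (pt (z + ζ)) Q

theorem A_add (z : Fin n → ℂ) (P Q : MvPolynomial (Fin n ⊕ Fin n) ℂ) :
    A z (P + Q) = A z P + A z Q := by
  unfold A
  rw [← integral_add (A_int z P) (A_int z Q)]
  simp [mul_add]

theorem A_C (z : Fin n → ℂ) (a : ℂ) (P : MvPolynomial (Fin n ⊕ Fin n) ℂ) :
    A z (C a * P) = a * A z P := by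
  unfold A
  rw [← integral_const_mul]
  refine integral_congr_ae (ae_of_all _ fun ζ => ?_)
  simp; ring

theorem A_one (z : Fin n → ℂ) : A z 1 = (π : ℂ) ^ n := by
  have h : ∫ ζ : ℂ, Complex.exp (-(conj ζ * ζ)) = π := by
    have := GaussianFourier.integral_cexp_neg_mul_sq_norm (V := ℂ) (b := 1) (by simp)
    simpa [← Complex.normSq_eq_conj_mul_self, Complex.normSq_eq_norm_sq] using this
  have := integral_fintype_prod_volume_eq_pow (ι := Fin n) (fun ζ : ℂ => Complex.exp (-(conj ζ * ζ)))
  rw [h, Fintype.card_fin] at this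
  rw [← this]
  simp [A, G_eq, ← Complex.exp_sum]

theorem A_parts (z v : Fin n → ℂ) (Q : MvPolynomial (Fin n ⊕ Fin n) ℂ) :
    A z (∑ s, C (pt v s) * pderiv s Q) =
      A z ((∑ s, C (pt v s) * (X s.swap - C (pt z s.swap))) * Q) := by
  have := integral_bilinear_hasLineDerivAt_right_eq_neg_left_of_integrable
    (B := ContinuousLinearMap.mul ℝ ℂ) (μ := (volume : Measure (Fin n → ℂ)))
    (f := G) (f' := fun ζ => -(G ζ * eval (pt (z + ζ)) (∑ s, C (pt v s) * (X s.swap - C (pt z s.swap)))))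
    (g := fun ζ => eval (pt (z + ζ)) Q)
    (g' := fun ζ => eval (pt (z + ζ)) (∑ s, C (pt v s) * pderiv s Q)) (v := v)
    ?_ ?_ ?_ (fun ζ _ => G_lineDeriv z ζ v) (fun ζ _ => eval_lineDeriv z ζ v Q)
  · simp only [ContinuousLinearMap.mul_apply'] at this
    unfold A
    rw [this, ← integral_neg]
    refine integral_congr_ae (ae_of_all _ fun ζ => ?_)
    simp only [map_mul]; ring
  · have := (A_int z ((∑ s, C (pt v s) * (X s.swap - C (pt z s.swap))) * Q)).neg
    convert this using 1
    funext ζ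
    simp only [ContinuousLinearMap.mul_apply', map_mul, Pi.neg_apply]; ring
  · simpa only [ContinuousLinearMap.mul_apply'] using A_int z _
  · simpa only [ContinuousLinearMap.mul_apply'] using A_int z _

theorem A_parts_c (z : Fin n → ℂ) (i : Fin n) (c : ℂ) (Q : MvPolynomial (Fin n ⊕ Fin n) ℂ) :
    conj c * A z (pderiv (Sum.inl i) Q) + c * A z (pderiv (Sum.inr i) Q) =
      conj c * (A z (X (Sum.inr i) * Q) - z i * A z Q) +
      c * (A z (X (Sum.inl i) * Q) - conj (z i) * A z Q) := by
  classical
  have h := A_parts z (Pi.single i c) Q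
  have e1 : (∑ s, C (pt (Pi.single i c) s) * pderiv s Q) =
      C (conj c) * pderiv (Sum.inl i) Q + C c * pderiv (Sum.inr i) Q := by
    rw [Fintype.sum_sum_type, Finset.sum_eq_single i, Finset.sum_eq_single i]
    all_goals simp +contextual [pt]
  have e2 : (∑ s, C (pt (Pi.single i c) s) * (X s.swap - C (pt z s.swap))) * Q =
      C (conj c) * (X (Sum.inr i) * Q + C (- z i) * Q) +
      C c * (X (Sum.inl i) * Q + C (- conj (z i)) * Q) := by
    rw [Fintype.sum_sum_type, Finset.sum_eq_single i, Finset.sum_eq_single i]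
    · simp [pt]; ring
    all_goals simp +contextual [pt]
  rw [e1, e2] at h
  simp only [A_add, A_C] at h
  linear_combination h

theorem A_X (z : Fin n → ℂ) (s : Fin n ⊕ Fin n) (Q : MvPolynomial (Fin n ⊕ Fin n) ℂ) :
    A z (X s * Q) = pt z s * A z Q + A z (pderiv s.swap Q) := by
  rcases s with i | i
  · have h1 := A_parts_c z i 1 Q
    have h2 := A_parts_c z i Complex.I Q
    simp only [map_one, Complex.conj_I] at h1 h2
    simp only [pt, Sum.elim_inl, Sum.swap_inl]
    linear_combination (-1 / 2 : ℂ) * h1 + (Complex.I / 2) * h2 + (A z (pderiv (Sum.inl i) Q) -  A z (pderiv (Sum.inr i) Q) - (A z (X (Sum.inr i) * Q) - z i * A z Q) + (A z (X (Sum.inl i) * Q) - conj (z i) * A z Q)) / 2 * Complex.I_sq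
  · have h1 := A_parts_c z i 1 Q
    have h2 := A_parts_c z i Complex.I Q
    simp only [map_one, Complex.conj_I] at h1 h2
    simp only [pt, Sum.elim_inr, Sum.swap_inr]
    linear_combination (-1 / 2 : ℂ) * h1 - (Complex.I / 2) * h2 - (A z (pderiv (Sum.inl i) Q) -  A z (pderiv (Sum.inr i) Q) - (A z (X (Sum.inr i) * Q) - z i * A z Q) + (A z (X (Sum.inl i) * Q) - conj (z i) * A z Q)) / 2 * Complex.I_sq

theorem main (z : Fin n → ℂ) (Q : MvPolynomial (Fin n ⊕ Fin n) ℂ) :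
    ((π : ℂ) ^ n)⁻¹ * A z Q = R (pt z) Q := by
  induction Q using poly_induct Sum.swap with
  | h0 =>
    rw [A_one, R_one, inv_mul_cancel₀]
    exact pow_ne_zero _ (by exact_mod_cast Real.pi_ne_zero)
  | hadd P Q hP hQ => rw [A_add, R_add, mul_add, hP, hQ]
  | hC a P hP => rw [A_C, R_C, ← hP]; ring
  | hX i P hP hQ => rw [A_X, R_X, ← hP, ← hQ]; ring

end HeatAux

/-- for a polynomial `Q(w, z)` of `2n` complex variables and any `z ∈ ℂⁿ`,
`π^{−n} ∫_{ℂⁿ} e^{−‖ζ‖²} Q(conj(z+ζ), z+ζ) dζ = Σ_{m=0}^∞ (1/m!) (Δ^m Q)(conj z, z)`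
(the heat-operator relation between antinormal and normal symbols); the series on the
right has only finitely many nonzero terms since `Q` is a polynomial. -/
theorem gaussian_average_eq_heat_operator {n : ℕ}
    (Q : MvPolynomial (Fin n ⊕ Fin n) ℂ) (z : Fin n → ℂ) :
    ((π : ℂ) ^ n)⁻¹ *
        ∫ ζ : Fin n → ℂ,
          Complex.exp (-((∑ i, Complex.normSq (ζ i) : ℝ) : ℂ)) *
            MvPolynomial.eval
              (Sum.elim (fun i => conj (z i + ζ i)) (fun i => z i + ζ i)) Q =
      ∑' m : ℕ, ((Nat.factorial m : ℂ))⁻¹ *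
        MvPolynomial.eval (Sum.elim (fun i => conj (z i)) (fun i => z i))
          (holomorphicLaplacian^[m] Q) := by
  have h := HeatAux.main z Q
  simp only [HeatAux.R, ← HeatAux.lapl_iter] at h
  exact h
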